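/- Let φ be a balanced N-function with characteristics (γ₁, γ₂). Then there exist constants c, C > 0, depending only on (γ₁, γ₂), such that for every d, n ≥ 1 and all P, Q ∈ ℝ^{d×n}: c·(φ*)_{|P|}(|P−Q|) ≤ |F*(P)−F*(Q)|² ≤ C·(φ*)_{|P|}(|P−Q|), where (φ*)_{|P|} denotes the shifted N-function of the conjugate φ* with shift |P|. -/

import Mathlib

open Real Filter Set Topology

noncomputable section

/-- An N-function: convex on `[0,∞)`, vanishing at `0`, positive on `(0,∞)`,
with `ψ t / t → 0` as `t → 0⁺` and `ψ t / t → ∞` as `t → ∞`. -/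
def IsNFunction (ψ : ℝ → ℝ) : Prop :=
  ConvexOn ℝ (Set.Ici 0) ψ ∧ ψ 0 = 0 ∧ (∀ t > 0, 0 < ψ t) ∧
    Filter.Tendsto (fun t => ψ t / t) (nhdsWithin 0 (Set.Ioi 0)) (nhds 0) ∧
    Filter.Tendsto (fun t => ψ t / t) Filter.atTop Filter.atTop

/-- A regular N-function: an N-function which is `C¹` on `[0,∞)`, `C²` on `(0,∞)`,
with `ψ'' t > 0` for all `t > 0`. -/
def IsRegularNFunction (ψ : ℝ → ℝ) : Prop :=
  IsNFunction ψ ∧ ContDiffOn ℝ 1 ψ (Set.Ici 0) ∧ ContDiffOn ℝ 2 ψ (Set.Ioi 0) ∧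
    ∀ t > 0, 0 < deriv (deriv ψ) t

/-- A balanced N-function with characteristics `(γ₁, γ₂)`. -/
def IsBalancedNFunction (ψ : ℝ → ℝ) (γ₁ γ₂ : ℝ) : Prop :=
  IsRegularNFunction ψ ∧ 0 < γ₁ ∧ γ₁ ≤ 1 ∧ 1 ≤ γ₂ ∧
    ∀ t > 0, γ₁ * deriv ψ t ≤ t * deriv (deriv ψ) t ∧
      t * deriv (deriv ψ) t ≤ γ₂ * deriv ψ t

/-- The conjugate N-function `ψ*(t) = sup_{s ≥ 0} (s·t − ψ(s))`. -/
def conjNF (ψ : ℝ → ℝ) (t : ℝ) : ℝ :=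
  ⨆ s : Set.Ici (0:ℝ), ((s : ℝ) * t - ψ s)

/-- `ψ` satisfies the Δ₂-condition with constant `K`. -/
def SatisfiesDelta2 (ψ : ℝ → ℝ) (K : ℝ) : Prop :=
  2 < K ∧ ∀ t ≥ (0:ℝ), ψ (2 * t) ≤ K * ψ t

/-- The derivative `ψ'_a(t) = ψ'(a+t)·t/(a+t)` of the shifted N-function. -/
def shiftDF (ψ : ℝ → ℝ) (a t : ℝ) : ℝ := deriv ψ (a + t) * t / (a + t)

/-- The shifted N-function `ψ_a(t) = ∫₀ᵗ ψ'(a+s)·s/(a+s) ds`. -/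
def shiftNF (ψ : ℝ → ℝ) (a t : ℝ) : ℝ := ∫ s in (0:ℝ)..t, shiftDF ψ a s

/-- Frobenius norm of a `d×n` real matrix. -/
def frobNorm {d n : ℕ} (P : Fin d → Fin n → ℝ) : ℝ :=
  Real.sqrt (∑ i : Fin d, ∑ j : Fin n, (P i j) ^ 2)

/-- Frobenius inner product `P : Q` of two `d×n` real matrices. -/
def frobInner {d n : ℕ} (P Q : Fin d → Fin n → ℝ) : ℝ :=
  ∑ i : Fin d, ∑ j : Fin n, P i j * Q i j

/-- `F(P) = √(φ'(|P|)/|P|)·P` (equal to `0` at `P = 0`). -/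
def FmapNF (φ : ℝ → ℝ) {d n : ℕ} (P : Fin d → Fin n → ℝ) : Fin d → Fin n → ℝ :=
  Real.sqrt (deriv φ (frobNorm P) / frobNorm P) • P

/-- `F*(P) = √((φ*)'(|P|)/|P|)·P` (equal to `0` at `P = 0`). -/
def FstarNF (φ : ℝ → ℝ) {d n : ℕ} (P : Fin d → Fin n → ℝ) : Fin d → Fin n → ℝ :=
  Real.sqrt (deriv (conjNF φ) (frobNorm P) / frobNorm P) • P

/-- The standard basis matrix with a `1` in entry `(k,l)`. -/
def basisMat {d n : ℕ} (k : Fin d) (l : Fin n) : Fin d → Fin n → ℝ :=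
  fun i j => if i = k ∧ j = l then 1 else 0

/-- `𝒜` has `φ`-structure with constants `(γ₃, γ₄)`. -/
def HasPhiStructure {d n : ℕ} (A : (Fin d → Fin n → ℝ) → (Fin d → Fin n → ℝ))
    (φ : ℝ → ℝ) (γ₃ γ₄ : ℝ) : Prop :=
  0 < γ₃ ∧ γ₃ ≤ 1 ∧ 1 < γ₄ ∧ Continuous A ∧
    ContDiffOn ℝ 1 A {P | P ≠ 0} ∧ A 0 = 0 ∧
    (∀ P : Fin d → Fin n → ℝ, P ≠ 0 → ∀ Q : Fin d → Fin n → ℝ,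
      γ₃ * (deriv φ (frobNorm P) / frobNorm P) * (frobNorm Q) ^ 2 ≤
        ∑ i : Fin d, ∑ j : Fin n, ∑ k : Fin d, ∑ l : Fin n,
          fderiv ℝ A P (basisMat k l) i j * Q i j * Q k l) ∧
    (∀ P : Fin d → Fin n → ℝ, P ≠ 0 → ∀ (i k : Fin d) (j l : Fin n),
      |fderiv ℝ A P (basisMat k l) i j| ≤ γ₄ * (deriv φ (frobNorm P) / frobNorm P))


theorem core_upper (k : ℕ) (l t w : ℝ) (hl0 : 0 ≤ l) (hl1 : l ≤ 1) (ht0 : 0 ≤ t) (ht1 : t ≤ 1)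
    (h2 : l ^ k ≤ t ^ 2) (hw0 : 0 ≤ w) (hw4 : w ≤ 4) :
    (1 - t) ^ 2 + t * w ≤ ((k:ℝ) ^ 2 + 18) * ((1 - l) ^ 2 + l * w) := by
  have hb : 1 - (k:ℝ) * (1 - l) ≤ l ^ k := by
    have := one_add_mul_le_pow (a := l - 1) (by linarith) k
    have e : 1 + (l - 1) = l := by ring
    rw [e] at this; nlinarith
  have ht : t ^ 2 ≤ t := by nlinarith
  have h3 : 1 - t ≤ k * (1 - l) := by linarith
  have h4 : (1 - t) ^ 2 ≤ (k:ℝ) ^ 2 * (1 - l) ^ 2 := by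
    rw [← mul_pow]; exact pow_le_pow_left₀ (by linarith) h3 2
  have hlw : 0 ≤ l * w := mul_nonneg hl0 hw0
  have h5 : t * w ≤ 18 * ((1 - l) ^ 2 + l * w) := by
    have : t * w ≤ w := by nlinarith
    rcases le_total (1/2) l with h | h
    · nlinarith [sq_nonneg (1 - l)]
    · nlinarith [sq_nonneg (1 - l)]
  have : 0 ≤ (k:ℝ)^2 * (l * w) := by positivity
  nlinarith

theorem core_lower (k : ℕ) (l t w : ℝ) (hl0 : 0 ≤ l) (hl1 : l ≤ 1) (ht0 : 0 ≤ t) (ht1 : t ≤ 1)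
    (h1 : t ^ 2 ≤ l) (h2 : l ^ k ≤ t ^ 2) (hw0 : 0 ≤ w) (hw4 : w ≤ 4) :
    (1 - l) ^ 2 + l * w ≤ (36 + 2 ^ k) * ((1 - t) ^ 2 + t * w) := by
  have ht : t ^ 2 ≤ t := by nlinarith
  have h3 : 1 - l ≤ 2 * (1 - t) := by nlinarith [sq_nonneg (1 - t)]
  have h4 : (1 - l) ^ 2 ≤ 4 * (1 - t) ^ 2 := by nlinarith
  have htw : 0 ≤ t * w := mul_nonneg ht0 hw0
  have hp : (0:ℝ) < 2 ^ k := by positivity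
  have h5 : l * w ≤ 32 * (1 - t) ^ 2 + 2 ^ k * (t * w) := by
    rcases le_total (1/2) l with h | h
    · have h6 : (1/2:ℝ) ^ k ≤ t := (pow_le_pow_left₀ (by norm_num) h k).trans (h2.trans ht)
      have h7 : 1 ≤ 2 ^ k * t := by
        have : (2:ℝ) ^ k * (1/2) ^ k = 1 := by rw [← mul_pow]; norm_num
        nlinarith
      have h8 : w ≤ 2 ^ k * t * w := by nlinarith
      nlinarith [sq_nonneg (1 - t)]
    · have : 1/4 ≤ 1 - t := by linarith
      have : l * w ≤ 2 := by nlinarith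
      have : 0 ≤ 2 ^ k * (t * w) := by positivity
      nlinarith
  have : 0 ≤ 2 ^ k * (1 - t) ^ 2 := by positivity
  nlinarith

/-- scalar form of the comparison when `b ≤ a` -/
theorem core_vec (k : ℕ) (a b x y r : ℝ) (ha : 0 < a) (hb : 0 ≤ b) (hba : b ≤ a) (hx : 0 < x)
    (hy : 0 ≤ y) (hr : |r| ≤ a * b)
    (h1 : (y * b) ^ 2 * a ≤ b * (x * a) ^ 2) (h2 : b ^ k * (x * a) ^ 2 ≤ (y * b) ^ 2 * a ^ k) :
    x ^ 2 * a ^ 2 - 2 * (x * y * r) + y ^ 2 * b ^ 2 ≤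
      ((k:ℝ) ^ 2 + 18) * (x ^ 2 * (a ^ 2 - 2 * r + b ^ 2)) ∧
    x ^ 2 * (a ^ 2 - 2 * r + b ^ 2) ≤
      (36 + 2 ^ k) * (x ^ 2 * a ^ 2 - 2 * (x * y * r) + y ^ 2 * b ^ 2) := by
  obtain ⟨w, hw0, hw4, hw⟩ : ∃ w : ℝ, 0 ≤ w ∧ w ≤ 4 ∧ r = a * b * (1 - w / 2) := by
    rcases hb.eq_or_lt with rfl | hb
    · refine ⟨0, le_rfl, by norm_num, ?_⟩
      have : |r| ≤ 0 := by simpa using hr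
      simpa using this
    · have := abs_le.1 hr
      have hab : 0 < a * b := by positivity
      refine ⟨2 * (1 - r / (a * b)), ?_, ?_, ?_⟩
      · have : r / (a * b) ≤ 1 := by rw [div_le_one hab]; linarith
        linarith
      · have : -1 ≤ r / (a * b) := by rw [le_div_iff₀ hab]; linarith
        linarith
      · field_simp; ring
  set l := b / a with hl
  set t := y * b / (x * a) with ht
  have hxa : 0 < x * a := by positivity
  have eb : b = l * a := by rw [hl]; field_simp
  have ey : y * b = t * (x * a) := by rw [ht]; field_simp
  have hl0 : 0 ≤ l := by positivity
  have hl1 : l ≤ 1 := by rw [hl, div_le_one ha]; exact hba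
  have ht0 : 0 ≤ t := by positivity
  have h1' : t ^ 2 ≤ l := by
    rw [ht, hl, div_pow, div_le_div_iff₀ (by positivity) ha]; exact h1
  have h2' : l ^ k ≤ t ^ 2 := by
    rw [ht, hl, div_pow, div_pow, div_le_div_iff₀ (by positivity) (by positivity)]; exact h2
  have ht1 : t ≤ 1 := by nlinarith
  have u := core_upper k l t w hl0 hl1 ht0 ht1 h2' hw0 hw4
  have v := core_lower k l t w hl0 hl1 ht0 ht1 h1' h2' hw0 hw4
  have e1 : x ^ 2 * a ^ 2 - 2 * (x * y * r) + y ^ 2 * b ^ 2 = (x * a) ^ 2 * ((1 - t) ^ 2 + t * w) := by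
    have : x ^ 2 * a ^ 2 - 2 * (x * y * r) + y ^ 2 * b ^ 2
      = (x * a) ^ 2 - 2 * ((x * a) * (y * b) * (1 - w / 2)) + (y * b) ^ 2 := by rw [hw]; ring
    rw [this, ey]; ring
  have e2 : x ^ 2 * (a ^ 2 - 2 * r + b ^ 2) = (x * a) ^ 2 * ((1 - l) ^ 2 + l * w) := by
    rw [hw, eb]; ring
  rw [e1, e2]
  have hs : 0 ≤ (x * a) ^ 2 := by positivity
  constructor
  · nlinarith [mul_le_mul_of_nonneg_left u hs]
  · nlinarith [mul_le_mul_of_nonneg_left v hs]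

/-- abstract properties of the derivative of the conjugate. -/
theorem shift_bounds (N : ℕ) (G : ℝ → ℝ) (hpos : ∀ u > 0, 0 < G u)
    (hmono : ∀ u v, 0 < u → u ≤ v → G u ≤ G v)
    (hN : ∀ u v, 0 < u → u ≤ v → G v * u ^ N ≤ G u * v ^ N) (a δ : ℝ) (ha : 0 ≤ a) (hδ : 0 ≤ δ)
    (had : 0 < a + δ) :
    (∫ s in (0:ℝ)..δ, G (a + s) * s / (a + s)) ≤ G (a + δ) / (a + δ) * δ ^ 2 ∧
    G (a + δ) / (a + δ) * δ ^ 2 ≤ 4 * 2 ^ N * ∫ s in (0:ℝ)..δ, G (a + s) * s / (a + s) := by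
  rcases hδ.eq_or_lt with rfl | hδ
  · simp
  set k : ℝ → ℝ := fun s => G (a + s) * s / (a + s) with hk
  have k0 : ∀ s, 0 ≤ s → 0 ≤ k s := by
    intro s hs
    rcases hs.eq_or_lt with rfl | hs
    · simp [hk]
    · have := hpos (a + s) (by linarith)
      simp only [hk]; positivity
  have km : MonotoneOn k (Icc 0 δ) := by
    intro s hs t ht hst
    rcases hs.1.eq_or_lt with rfl | h
    · simpa [hk] using k0 t ht.1
    · have h1 := hmono (a + s) (a + t) (by linarith) (by linarith)
      have h2 : s / (a + s) ≤ t / (a + t) := by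
        rw [div_le_div_iff₀ (by linarith) (by linarith)]; nlinarith
      have := hpos (a + s) (by linarith)
      simp only [hk, mul_div_assoc]
      gcongr
      linarith
  have i1 : IntervalIntegrable k MeasureTheory.volume 0 (δ/2) := by
    apply MonotoneOn.intervalIntegrable
    rw [uIcc_of_le (by linarith)]
    exact km.mono (Icc_subset_Icc le_rfl (by linarith))
  have i2 : IntervalIntegrable k MeasureTheory.volume (δ/2) δ := by
    apply MonotoneOn.intervalIntegrable
    rw [uIcc_of_le (by linarith)]
    exact km.mono (Icc_subset_Icc (by linarith) le_rfl)
  have hs := intervalIntegral.integral_add_adjacent_intervals i1 i2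
  have i3 := i1.trans i2
  constructor
  · have := intervalIntegral.integral_mono_on (b := δ) (a := 0) (f := k) (g := fun _ => k δ) hδ.le i3
      (by simp) (fun s hs => km hs ⟨hδ.le, le_rfl⟩ hs.2)
    simp only [intervalIntegral.integral_const, smul_eq_mul, sub_zero] at this
    refine this.trans (le_of_eq ?_)
    simp only [hk]; ring
  · have j1 : 0 ≤ ∫ s in (0:ℝ)..(δ/2), k s :=
      intervalIntegral.integral_nonneg (by linarith) (fun s hs => k0 s hs.1)
    have j2 := intervalIntegral.integral_mono_on (b := δ) (a := δ/2) (g := k) (f := fun _ => k (δ/2))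
      (by linarith) (by simp) i2
      (fun s hs => km ⟨by linarith, by linarith⟩ ⟨by linarith [hs.1], hs.2⟩ hs.1)
    simp only [intervalIntegral.integral_const, smul_eq_mul] at j2
    have j3 : G (a + δ) ≤ 2 ^ N * G (a + δ/2) := by
      have h1 := hN (a + δ/2) (a + δ) (by linarith) (by linarith)
      have h2 : (a + δ) ^ N ≤ 2 ^ N * (a + δ/2) ^ N := by
        rw [← mul_pow]; exact pow_le_pow_left₀ had.le (by linarith) N
      have h3 : 0 < (a + δ/2) ^ N := by positivity
      have h4 := hpos (a + δ/2) (by linarith)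
      refine le_of_mul_le_mul_right (h1.trans ?_) h3
      nlinarith
    have j4 : G (a + δ) / (a + δ) ≤ 2 ^ N * G (a + δ/2) / (a + δ/2) := by
      have h4 := hpos (a + δ/2) (by linarith)
      gcongr
      linarith
    have j5 : G (a + δ) / (a + δ) * δ ^ 2 ≤ 4 * 2 ^ N * ((δ - δ/2) * k (δ/2)) := by
      calc _ ≤ 2 ^ N * G (a + δ/2) / (a + δ/2) * δ ^ 2 := by gcongr
        _ = _ := by simp only [hk]; ring
    refine j5.trans ?_
    gcongr
    linarith

theorem frobNorm_sq {d n : ℕ} (P : Fin d → Fin n → ℝ) :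
    frobNorm P ^ 2 = ∑ i : Fin d, ∑ j : Fin n, (P i j) ^ 2 :=
  Real.sq_sqrt (Finset.sum_nonneg fun _ _ => Finset.sum_nonneg fun _ _ => sq_nonneg _)

theorem frobNorm_nonneg' {d n : ℕ} (P : Fin d → Fin n → ℝ) : 0 ≤ frobNorm P := Real.sqrt_nonneg _

theorem frobNorm_comb {d n : ℕ} (x y : ℝ) (P Q : Fin d → Fin n → ℝ) :
    frobNorm (x • P - y • Q) ^ 2 =
      x ^ 2 * frobNorm P ^ 2 - 2 * (x * y * frobInner P Q) + y ^ 2 * frobNorm Q ^ 2 := by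
  rw [frobNorm_sq, frobNorm_sq, frobNorm_sq, frobInner]
  simp only [Finset.mul_sum, ← Finset.sum_sub_distrib, ← Finset.sum_add_distrib]
  refine Finset.sum_congr rfl fun i _ => Finset.sum_congr rfl fun j _ => ?_
  simp only [Pi.sub_apply, Pi.smul_apply, smul_eq_mul]
  ring

theorem frobInner_abs_le {d n : ℕ} (P Q : Fin d → Fin n → ℝ) :
    |frobInner P Q| ≤ frobNorm P * frobNorm Q := by
  apply abs_le_of_sq_le_sq _ (mul_nonneg (frobNorm_nonneg' P) (frobNorm_nonneg' Q))
  rw [mul_pow, frobNorm_sq, frobNorm_sq, frobInner]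
  have := Finset.sum_mul_sq_le_sq_mul_sq (Finset.univ : Finset (Fin d × Fin n))
    (fun p => P p.1 p.2) (fun p => Q p.1 p.2)
  simpa only [Fintype.sum_prod_type] using this

theorem frobNorm_diff {d n : ℕ} (P Q : Fin d → Fin n → ℝ) :
    frobNorm (P - Q) ^ 2 = frobNorm P ^ 2 - 2 * frobInner P Q + frobNorm Q ^ 2 := by
  have := frobNorm_comb 1 1 P Q
  simpa using this

theorem frobInner_comm' {d n : ℕ} (P Q : Fin d → Fin n → ℝ) :
    frobInner P Q = frobInner Q P := by
  unfold frobInner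
  refine Finset.sum_congr rfl fun i _ => Finset.sum_congr rfl fun j _ => mul_comm _ _

/-- comparison with the larger norm -/
theorem pair_bounds (N : ℕ) (G : ℝ → ℝ) (hpos : ∀ u > 0, 0 < G u)
    (hmono : ∀ u v, 0 < u → u ≤ v → G u ≤ G v)
    (hN : ∀ u v, 0 < u → u ≤ v → G v * u ^ N ≤ G u * v ^ N) {d n : ℕ}
    (P Q : Fin d → Fin n → ℝ) (hP : 0 < frobNorm P) (hQP : frobNorm Q ≤ frobNorm P) :
    frobNorm (√(G (frobNorm P) / frobNorm P) • P - √(G (frobNorm Q) / frobNorm Q) • Q) ^ 2 ≤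
      (((N + 1 : ℕ):ℝ) ^ 2 + 18) * (G (frobNorm P) / frobNorm P * frobNorm (P - Q) ^ 2) ∧
    G (frobNorm P) / frobNorm P * frobNorm (P - Q) ^ 2 ≤ (36 + 2 ^ (N + 1)) *
      frobNorm (√(G (frobNorm P) / frobNorm P) • P - √(G (frobNorm Q) / frobNorm Q) • Q) ^ 2 := by
  rw [frobNorm_comb, frobNorm_diff]
  have hr := frobInner_abs_le P Q
  have hb := frobNorm_nonneg' Q
  set a := frobNorm P
  set b := frobNorm Q
  set r := frobInner P Q
  have hGa := hpos a hP
  have ex : √(G a / a) ^ 2 = G a / a := Real.sq_sqrt (by positivity)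
  have hxa : (√(G a / a) * a) ^ 2 = a * G a := by
    rw [mul_pow, ex]; field_simp
  have hyb : (√(G b / b) * b) ^ 2 = b * G b := by
    rcases hb.eq_or_lt with h | h
    · rw [← h]; simp
    · have := hpos b h
      rw [mul_pow, Real.sq_sqrt (by positivity)]; field_simp
  have key := core_vec (N + 1) a b (√(G a / a)) (√(G b / b)) r hP hb hQP
    (Real.sqrt_pos.2 (by positivity)) (Real.sqrt_nonneg _) hr ?_ ?_
  · rw [ex] at key
    rw [ex]
    exact key
  · rw [hxa, hyb]
    rcases hb.eq_or_lt with h | h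
    · rw [← h]; simp
    · have := hmono b a h hQP
      have hab : 0 < a * b := by positivity
      nlinarith
  · rw [hxa, hyb]
    rcases hb.eq_or_lt with h | h
    · rw [← h]; simp
    · have := hN b a h hQP
      have hab : 0 < a * b := by positivity
      calc _ = (a * b) * (G a * b ^ N) := by ring
        _ ≤ (a * b) * (G b * a ^ N) := by gcongr
        _ = _ := by ring

theorem ratio_bounds (N : ℕ) (G : ℝ → ℝ) (hpos : ∀ u > 0, 0 < G u)
    (hmono : ∀ u v, 0 < u → u ≤ v → G u ≤ G v)
    (hN : ∀ u v, 0 < u → u ≤ v → G v * u ^ N ≤ G u * v ^ N) (m v : ℝ) (hm : 0 < m) (hmv : m ≤ v)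
    (hv : v ≤ 3 * m) : G m / m ≤ 3 * (G v / v) ∧ G v / v ≤ 3 ^ N * (G m / m) := by
  have h1 := hpos m hm
  have h2 := hmono m v hm hmv
  have h3 := hN m v hm hmv
  have hv0 : 0 < v := by linarith
  constructor
  · rw [← mul_div_assoc, div_le_div_iff₀ hm hv0]
    nlinarith
  · have h4 : G v ≤ 3 ^ N * G m := by
      have h5 : v ^ N ≤ 3 ^ N * m ^ N := by
        rw [← mul_pow]; exact pow_le_pow_left₀ hv0.le hv N
      have : 0 < m ^ N := by positivity
      refine le_of_mul_le_mul_right (h3.trans ?_) this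
      nlinarith
    rw [← mul_div_assoc]
    gcongr

/-- properties of the derivative of the conjugate -/
theorem conj_props (γ₁ γ₂ : ℝ) (φ : ℝ → ℝ) (hφ : IsBalancedNFunction φ γ₁ γ₂) (N : ℕ) (hN1 : 1 ≤ N)
    (hNγ : 1 / γ₁ ≤ N) :
    (∀ u > 0, 0 < deriv (conjNF φ) u) ∧
    (∀ u v, 0 < u → u ≤ v → deriv (conjNF φ) u ≤ deriv (conjNF φ) v) ∧
    (∀ u v, 0 < u → u ≤ v → deriv (conjNF φ) v * u ^ N ≤ deriv (conjNF φ) u * v ^ N) := by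
  obtain ⟨⟨⟨hconv, h0, hp, -, -⟩, -, hC2, hdd⟩, hγ, -, -, hbal⟩ := hφ
  set f := deriv φ with hf
  have dφ : ∀ t > 0, HasDerivAt φ (f t) t := fun t ht =>
    ((hC2.contDiffAt (Ioi_mem_nhds ht)).differentiableAt (by norm_num)).hasDerivAt
  have df : ∀ t > 0, HasDerivAt f (deriv f t) t := fun t ht =>
    (differentiableAt_of_deriv_ne_zero (hdd t ht).ne').hasDerivAt
  have tang : ∀ t > 0, ∀ s ≥ 0, φ t + f t * (s - t) ≤ φ s := by
    intro t ht s hs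
    rcases lt_trichotomy s t with h | h | h
    · have := hconv.slope_le_of_hasDerivAt (x := s) (y := t) hs ht.le h (dφ t ht)
      rw [slope_def_field, div_le_iff₀ (by linarith)] at this
      nlinarith
    · subst h; simp
    · have := hconv.le_slope_of_hasDerivAt (x := t) (y := s) ht.le hs h (dφ t ht)
      rw [slope_def_field, le_div_iff₀ (by linarith)] at this
      nlinarith
  have fpos : ∀ t > 0, 0 < f t := by
    intro t ht
    have h1 := tang t ht 0 le_rfl
    have h2 := hp t ht
    rw [h0] at h1
    by_contra h
    nlinarith
  have fcont : ContinuousOn f (Ioi 0) := fun t ht => (df t ht).continuousAt.continuousWithinAt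
  have fsm : StrictMonoOn f (Ioi 0) := by
    apply strictMonoOn_of_deriv_pos (convex_Ioi 0) fcont
    intro x hx
    rw [interior_Ioi] at hx
    exact hdd x hx
  have fpow : MonotoneOn (fun t => f t ^ N / t) (Ioi 0) := by
    have hd : ∀ t > 0, HasDerivAt (fun t => f t ^ N / t)
        (((N:ℝ) * f t ^ (N - 1) * deriv f t * t - f t ^ N * 1) / t ^ 2) t := fun t ht =>
      ((df t ht).pow N).div (hasDerivAt_id t) ht.ne'
    apply monotoneOn_of_deriv_nonneg (convex_Ioi 0)
    · exact fun t ht => (hd t ht).continuousAt.continuousWithinAt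
    · rw [interior_Ioi]
      exact fun t ht => (hd t ht).differentiableAt.differentiableWithinAt
    · rw [interior_Ioi]
      intro t ht
      rw [(hd t ht).deriv]
      apply div_nonneg _ (sq_nonneg _)
      have h1 := (hbal t ht).1
      have h2 := fpos t ht
      have h3 : 1 ≤ N * γ₁ := by rwa [div_le_iff₀ hγ] at hNγ
      have h4 : f t ≤ N * (t * deriv f t) := by
        calc f t ≤ (N * γ₁) * f t := by nlinarith
          _ = N * (γ₁ * f t) := by ring
          _ ≤ _ := by gcongr
      have h5 : f t ^ N = f t ^ (N - 1) * f t := by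
        rw [← pow_succ]; congr 1; omega
      rw [h5]
      have h6 : 0 < f t ^ (N - 1) := by positivity
      nlinarith
  have surj : ∀ u > 0, ∃ t > 0, f t = u := by
    intro u hu
    have hf1 := fpos 1 one_pos
    -- a point where f is small
    obtain ⟨a, ha, ha1, hau⟩ : ∃ a > 0, a ≤ 1 ∧ f a ≤ u := by
      refine ⟨min 1 ((u / f 1) ^ N), by positivity, min_le_left _ _, ?_⟩
      set a := min 1 ((u / f 1) ^ N) with hadef
      have ha : 0 < a := by positivity
      have h1 : f a ^ N / a ≤ f 1 ^ N / 1 := fpow ha (mem_Ioi.2 one_pos) (min_le_left _ _)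
      rw [div_one, div_le_iff₀ ha] at h1
      have h2 : a ≤ (u / f 1) ^ N := min_le_right _ _
      have h3 : f a ^ N ≤ u ^ N := by
        calc f a ^ N ≤ f 1 ^ N * a := h1
          _ ≤ f 1 ^ N * (u / f 1) ^ N := by gcongr
          _ = u ^ N := by rw [← mul_pow]; congr 1; field_simp
      exact le_of_pow_le_pow_left₀ (by omega) hu.le h3
    obtain ⟨b, hb1, hbu⟩ : ∃ b ≥ 1, u ≤ f b := by
      refine ⟨max 1 ((u / f 1) ^ N), le_max_left _ _, ?_⟩
      set b := max 1 ((u / f 1) ^ N) with hbdef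
      have hb1 : 1 ≤ b := le_max_left _ _
      have hb : 0 < b := by linarith
      have h1 : f 1 ^ N / 1 ≤ f b ^ N / b := fpow (mem_Ioi.2 one_pos) hb hb1
      rw [div_one, le_div_iff₀ hb] at h1
      have h2 : (u / f 1) ^ N ≤ b := le_max_right _ _
      have h3 : u ^ N ≤ f b ^ N := by
        calc u ^ N = f 1 ^ N * (u / f 1) ^ N := by rw [← mul_pow]; congr 1; field_simp
          _ ≤ f 1 ^ N * b := by gcongr
          _ ≤ _ := h1
      exact le_of_pow_le_pow_left₀ (by omega) (fpos b hb).le h3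
    have hab : a ≤ b := by linarith
    obtain ⟨t, ht, htu⟩ := intermediate_value_Icc hab
      (fcont.mono (fun x hx => lt_of_lt_of_le ha hx.1)) ⟨hau, hbu⟩
    exact ⟨t, lt_of_lt_of_le ha ht.1, htu⟩
  choose! g gpos hg using surj
  have gmono : ∀ u v, 0 < u → u ≤ v → g u ≤ g v := by
    intro u v hu huv
    have hv : 0 < v := by linarith
    rw [← fsm.le_iff_le (gpos u hu) (gpos v hv), hg u hu, hg v hv]
    exact huv
  have gN : ∀ u v, 0 < u → u ≤ v → g v * u ^ N ≤ g u * v ^ N := by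
    intro u v hu huv
    have hv : 0 < v := by linarith
    have h := fpow (gpos u hu) (gpos v hv) (gmono u v hu huv)
    simp only [hg u hu, hg v hv] at h
    rw [div_le_div_iff₀ (gpos u hu) (gpos v hv)] at h
    linarith
  have young : ∀ u > 0, ∀ s ≥ 0, s * u - φ s ≤ g u * u - φ (g u) := by
    intro u hu s hs
    have := tang (g u) (gpos u hu) s hs
    rw [hg u hu] at this
    linarith
  have cval : ∀ u > 0, conjNF φ u = g u * u - φ (g u) := by
    intro u hu
    apply le_antisymm
    · have : Nonempty (Set.Ici (0:ℝ)) := ⟨⟨0, by simp⟩⟩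
      exact ciSup_le fun s => young u hu s s.2
    · exact le_ciSup (f := fun s : Set.Ici (0:ℝ) => (s:ℝ) * u - φ s)
        ⟨g u * u - φ (g u), by rintro _ ⟨s, rfl⟩; exact young u hu s s.2⟩ ⟨g u, (gpos u hu).le⟩
  have gcont : ∀ u > 0, ContinuousAt g u := by
    intro u hu
    have hsm : StrictMonoOn g (Ioi 0) := by
      intro x hx y hy hxy
      refine lt_of_le_of_ne (gmono x y hx hxy.le) fun h => ?_
      have := hg x hx
      rw [h, hg y hy] at this
      linarith
    apply hsm.continuousAt_of_image_mem_nhds (Ioi_mem_nhds hu)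
    have : g '' Ioi 0 = Ioi 0 := by
      apply Subset.antisymm
      · rintro _ ⟨x, hx, rfl⟩; exact gpos x hx
      · intro t ht
        exact ⟨f t, fpos t ht, fsm.injOn (gpos _ (fpos t ht)) ht (hg _ (fpos t ht))⟩
    rw [this]
    exact Ioi_mem_nhds (gpos u hu)
  have cder : ∀ u > 0, HasDerivAt (conjNF φ) (g u) u := by
    intro u hu
    rw [hasDerivAt_iff_isLittleO, Asymptotics.isLittleO_iff]
    intro c hc
    have h1 : ∀ᶠ v in 𝓝 u, |g v - g u| < c := by
      have := Metric.tendsto_nhds.1 (gcont u hu) c hc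
      simpa [Real.dist_eq] using this
    filter_upwards [h1, Ioi_mem_nhds hu] with v hv hv0
    have hv0 : 0 < v := hv0
    rw [cval u hu, cval v hv0]
    have y1 := young u hu (g v) (gpos v hv0).le
    have y2 := young v hv0 (g u) (gpos u hu).le
    simp only [Real.norm_eq_abs, smul_eq_mul]
    have h3 : |g v * v - φ (g v) - (g u * u - φ (g u)) - (v - u) * g u|
        ≤ |g v - g u| * |v - u| := by
      rw [← abs_mul, abs_of_nonneg (by linarith)]
      refine le_trans ?_ (le_abs_self _)
      linarith
    exact h3.trans (by gcongr)
  have ed : ∀ u > 0, deriv (conjNF φ) u = g u := fun u hu => (cder u hu).deriv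
  refine ⟨fun u hu => by rw [ed u hu]; exact gpos u hu, fun u v hu huv => ?_, fun u v hu huv => ?_⟩
  · rw [ed u hu, ed v (by linarith)]; exact gmono u v hu huv
  · rw [ed u hu, ed v (by linarith)]; exact gN u v hu huv

/-- `|F*(P)−F*(Q)|² ∼ (φ*)_{|P|}(|P−Q|)` with constants depending only
on the characteristics `(γ₁, γ₂)` of the balanced N-function `φ`. -/
theorem Fstar_equiv_shift_conj (γ₁ γ₂ : ℝ) :
    ∃ c > (0:ℝ), ∃ C > (0:ℝ), ∀ φ : ℝ → ℝ, IsBalancedNFunction φ γ₁ γ₂ →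
      ∀ d n : ℕ, 1 ≤ d → 1 ≤ n → ∀ P Q : Fin d → Fin n → ℝ,
        c * shiftNF (conjNF φ) (frobNorm P) (frobNorm (P - Q)) ≤
            frobNorm (FstarNF φ P - FstarNF φ Q) ^ 2 ∧
          frobNorm (FstarNF φ P - FstarNF φ Q) ^ 2 ≤
            C * shiftNF (conjNF φ) (frobNorm P) (frobNorm (P - Q)) := by
  set N : ℕ := ⌈1 / γ₁⌉₊ + 1 with hNdef
  have hNγ : 1 / γ₁ ≤ N := by
    have := Nat.le_ceil (1 / γ₁)
    rw [hNdef]; push_cast; linarith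
  refine ⟨1 / (3 ^ N * (36 + 2 ^ (N + 1))), by positivity,
    (((N + 1 : ℕ):ℝ) ^ 2 + 18) * 3 * (4 * 2 ^ N), by positivity, ?_⟩
  intro φ hφ d n _ _ P Q
  obtain ⟨hpos, hmono, hN⟩ := conj_props γ₁ γ₂ φ hφ N (by omega) hNγ
  unfold shiftNF shiftDF FstarNF
  set G := deriv (conjNF φ)
  have ha := frobNorm_nonneg' P
  have hb := frobNorm_nonneg' Q
  have hδ := frobNorm_nonneg' (P - Q)
  have hr := abs_le.1 (frobInner_abs_le P Q)
  have hd := frobNorm_diff P Q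
  have t1 : frobNorm (P - Q) ≤ frobNorm P + frobNorm Q :=
    abs_le_of_sq_le_sq' (by nlinarith) (by linarith) |>.2
  have t2 : frobNorm Q ≤ frobNorm P + frobNorm (P - Q) := by
    have : frobNorm Q - frobNorm P ≤ frobNorm (P - Q) :=
      (abs_le_of_sq_le_sq' (by nlinarith) hδ).2
    linarith
  -- reduction to a comparison with the maximum
  obtain h0 | ⟨m, hm, hm1, hm2, hD⟩ : (frobNorm P = 0 ∧ frobNorm Q = 0) ∨ ∃ m > 0,
      m ≤ frobNorm P + frobNorm (P - Q) ∧ frobNorm P + frobNorm (P - Q) ≤ 3 * m ∧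
      (frobNorm (√(G (frobNorm P) / frobNorm P) • P - √(G (frobNorm Q) / frobNorm Q) • Q) ^ 2 ≤
        (((N + 1 : ℕ):ℝ) ^ 2 + 18) * (G m / m * frobNorm (P - Q) ^ 2) ∧
      G m / m * frobNorm (P - Q) ^ 2 ≤ (36 + 2 ^ (N + 1)) *
        frobNorm (√(G (frobNorm P) / frobNorm P) • P - √(G (frobNorm Q) / frobNorm Q) • Q) ^ 2) := by
    rcases le_total (frobNorm Q) (frobNorm P) with h | h
    · rcases ha.eq_or_lt with h' | h'
      · left; constructor <;> linarith
      · right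
        exact ⟨frobNorm P, h', by linarith, by linarith,
          pair_bounds N G hpos hmono hN P Q h' h⟩
    · rcases hb.eq_or_lt with h' | h'
      · left; constructor <;> linarith
      · right
        refine ⟨frobNorm Q, h', by linarith, by linarith, ?_⟩
        have := pair_bounds N G hpos hmono hN Q P h' h
        have e1 : frobNorm (Q - P) ^ 2 = frobNorm (P - Q) ^ 2 := by
          rw [frobNorm_diff, frobNorm_diff, frobInner_comm']; ring
        have e2 : ∀ x y : ℝ, frobNorm (x • Q - y • P) ^ 2 = frobNorm (y • P - x • Q) ^ 2 := by
          intro x y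
          rw [frobNorm_comb, frobNorm_comb, frobInner_comm']; ring
        rw [e1, e2] at this
        exact this
  · obtain ⟨hP0, hQ0⟩ := h0
    have hδ0 : frobNorm (P - Q) = 0 := by linarith
    have hz : frobNorm (√(G (frobNorm P) / frobNorm P) • P
        - √(G (frobNorm Q) / frobNorm Q) • Q) ^ 2 = 0 := by
      rw [frobNorm_comb, hP0, hQ0]; simp
    rw [hz, hδ0]; simp
  · obtain ⟨s1, s2⟩ := shift_bounds N G hpos hmono hN (frobNorm P) (frobNorm (P - Q)) ha hδ
      (by linarith)
    obtain ⟨r1, r2⟩ := ratio_bounds N G hpos hmono hN m (frobNorm P + frobNorm (P - Q)) hm hm1 hm2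
    obtain ⟨d1, d2⟩ := hD
    set δ := frobNorm (P - Q)
    set v := frobNorm P + δ
    set S := ∫ s in (0:ℝ)..δ, G (frobNorm P + s) * s / (frobNorm P + s)
    set D := frobNorm (√(G (frobNorm P) / frobNorm P) • P
        - √(G (frobNorm Q) / frobNorm Q) • Q) ^ 2
    constructor
    · rw [one_div, inv_mul_le_iff₀ (by positivity)]
      calc S ≤ G v / v * δ ^ 2 := s1
        _ ≤ 3 ^ N * (G m / m) * δ ^ 2 := by gcongr
        _ = 3 ^ N * (G m / m * δ ^ 2) := by ring
        _ ≤ 3 ^ N * ((36 + 2 ^ (N + 1)) * D) := by gcongr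
        _ = _ := by ring
    · calc D ≤ (((N + 1 : ℕ):ℝ) ^ 2 + 18) * (G m / m * δ ^ 2) := d1
        _ ≤ (((N + 1 : ℕ):ℝ) ^ 2 + 18) * (3 * (G v / v) * δ ^ 2) := by gcongr
        _ = (((N + 1 : ℕ):ℝ) ^ 2 + 18) * 3 * (G v / v * δ ^ 2) := by ring
        _ ≤ (((N + 1 : ℕ):ℝ) ^ 2 + 18) * 3 * (4 * 2 ^ N * S) := by gcongr
        _ = _ := by ring

end
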